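/- Let ε_k → 0⁺. On the set Y of Young measures ν with ν_x([−1,1]) = 1 for a.e. x, define E_{ε}(ν) = (1/ε)∫₀¹∫_ℝ Φ(λ) dν_x(λ) dx, and define E₀(ν) = 0 if ν_x({−1,1}) = 1 for a.e. x and E₀(ν) = +∞ otherwise. Then E_{ε_k} Γ-converges to E₀ on Y with respect to narrow convergence of Young measures. -/

import Mathlib

open MeasureTheory Filter
open scoped Classical

noncomputable section

/-- The open unit interval `(0,1)` as a subset of `ℝ`. -/
def I01 : Set ℝ := Set.Ioo 0 1

/-- The double-well potential `Φ(s) = (s² − 1)²`. -/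
def Phi (s : ℝ) : ℝ := (s ^ 2 - 1) ^ 2

/-- A Young measure on `(0,1)`: a measurable family of Borel probability measures on `ℝ`. -/
def IsYoungMeasure (ν : ℝ → Measure ℝ) : Prop :=
  Measurable ν ∧ ∀ x, IsProbabilityMeasure (ν x)

/-- The type of Young measures `ν` with `ν_x([−1,1]) = 1` for a.e. `x ∈ (0,1)`. -/
def YMb := {ν : ℝ → Measure ℝ // IsYoungMeasure ν ∧
  ∀ᵐ x ∂(volume.restrict I01), ν x (Set.Icc (-1 : ℝ) 1) = 1}

/-- Narrow convergence of Young measures. -/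
def NarrowConv (ν : ℕ → ℝ → Measure ℝ) (μ : ℝ → Measure ℝ) : Prop :=
  ∀ f : ℝ → ℝ, Continuous f → (∃ C, ∀ s, |f s| ≤ C) →
    ∀ g : ℝ → ℝ, IntegrableOn g I01 →
      Tendsto (fun n => ∫ x in I01, g x * ∫ t, f t ∂(ν n x)) atTop
        (nhds (∫ x in I01, g x * ∫ t, f t ∂(μ x)))

/-- Γ-convergence of functionals with values in `ℝ ∪ {±∞}`. -/
def GammaConv {X : Type*} (conv : (ℕ → X) → X → Prop)
    (F : ℕ → X → EReal) (Flim : X → EReal) : Prop :=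
  (∀ (xs : ℕ → X) (x : X), conv xs x →
      Flim x ≤ Filter.liminf (fun n => F n (xs n)) Filter.atTop) ∧
  (∀ x : X, ∃ xs : ℕ → X, conv xs x ∧
      Filter.limsup (fun n => F n (xs n)) Filter.atTop ≤ Flim x)

/-- A bounded continuous truncation of the potential. -/
def PhiT (s : ℝ) : ℝ := min (Phi s) 1

lemma Phi_continuous : Continuous Phi := by unfold Phi; fun_prop
lemma PhiT_continuous : Continuous PhiT := by
  unfold PhiT; exact Phi_continuous.min continuous_const
lemma Phi_nonneg (s : ℝ) : 0 ≤ Phi s := by unfold Phi; positivity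
lemma PhiT_nonneg (s : ℝ) : 0 ≤ PhiT s := le_min (Phi_nonneg s) zero_le_one
lemma PhiT_abs_le (s : ℝ) : |PhiT s| ≤ 1 := by
  rw [abs_of_nonneg (PhiT_nonneg s)]; exact min_le_right _ _

lemma PhiT_eq {s : ℝ} (hs : s ∈ Set.Icc (-1 : ℝ) 1) : Phi s = PhiT s := by
  unfold PhiT
  rw [min_eq_left]
  unfold Phi
  have h1 : s ^ 2 ≤ 1 := by nlinarith [hs.1, hs.2]
  nlinarith [sq_nonneg s]

lemma PhiT_eq_zero {s : ℝ} : PhiT s = 0 ↔ s ∈ ({-1, 1} : Set ℝ) := by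
  have h : PhiT s = 0 ↔ Phi s = 0 := by
    unfold PhiT
    constructor
    · intro h
      rcases min_choice (Phi s) 1 with h' | h'
      · rw [← h', h]
      · rw [h'] at h; norm_num at h
    · intro h; rw [h]; norm_num
  rw [h]
  unfold Phi
  simp only [Set.mem_insert_iff, Set.mem_singleton_iff]
  rw [pow_eq_zero_iff two_ne_zero, sub_eq_zero]
  rw [show (1:ℝ) = 1 ^ 2 by norm_num, sq_eq_sq_iff_eq_or_eq_neg]; norm_num; tauto

lemma inner_eq (ν : YMb) :
    ∫ x in I01, ∫ t, Phi t ∂(ν.1 x) = ∫ x in I01, ∫ t, PhiT t ∂(ν.1 x) := by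
  apply integral_congr_ae
  filter_upwards [ν.2.2] with x hx
  have := ν.2.1.2 x
  apply integral_congr_ae
  have : ∀ᵐ t ∂(ν.1 x), t ∈ Set.Icc (-1 : ℝ) 1 :=
    (mem_ae_iff_prob_eq_one measurableSet_Icc).2 hx
  filter_upwards [this] with t ht using PhiT_eq ht

lemma PhiT_integrable (μ : Measure ℝ) [IsProbabilityMeasure μ] : Integrable PhiT μ :=
  Integrable.of_bound PhiT_continuous.aestronglyMeasurable 1 (Eventually.of_forall PhiT_abs_le)

lemma inner_integrable (ν : YMb) :
    Integrable (fun x => ∫ t, PhiT t ∂(ν.1 x)) (volume.restrict I01) := by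
  have : IsFiniteMeasure (volume.restrict I01) := by
    unfold I01; infer_instance
  let κ : ProbabilityTheory.Kernel ℝ ℝ := ⟨ν.1, ν.2.1.1⟩
  have hκ : StronglyMeasurable (fun x => ∫ t, PhiT t ∂(κ x)) :=
    PhiT_continuous.stronglyMeasurable.integral_kernel
  refine Integrable.of_bound (C := 1) hκ.aestronglyMeasurable (Eventually.of_forall fun x => ?_)
  have := ν.2.1.2 x
  have := norm_integral_le_of_norm_le_const (μ := ν.1 x) (f := PhiT) (C := 1) (Eventually.of_forall PhiT_abs_le)
  simpa using this

lemma energy_nonneg (ν : YMb) : 0 ≤ ∫ x in I01, ∫ t, PhiT t ∂(ν.1 x) :=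
  integral_nonneg fun _ => integral_nonneg PhiT_nonneg

lemma energy_eq_zero (ν : YMb) : ∫ x in I01, ∫ t, PhiT t ∂(ν.1 x) = 0 ↔
    ∀ᵐ x ∂(volume.restrict I01), ν.1 x ({-1, 1} : Set ℝ) = 1 := by
  rw [integral_eq_zero_iff_of_nonneg (fun _ => integral_nonneg PhiT_nonneg) (inner_integrable ν)]
  apply eventually_congr
  refine Eventually.of_forall fun x => ?_
  have := ν.2.1.2 x
  simp only [Pi.zero_apply]
  rw [integral_eq_zero_iff_of_nonneg PhiT_nonneg (PhiT_integrable _)]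
  rw [← mem_ae_iff_prob_eq_one (by measurability)]
  apply eventually_congr
  exact Eventually.of_forall fun s => PhiT_eq_zero

/-- Γ-convergence of the scaled double-well potentials `E_ε(ν) = (1/ε)∫₀¹∫ Φ dν_x dx`, as
`ε → 0⁺`, to the functional which is `0` on Young measures supported on `{−1,1}` and `+∞`
otherwise. -/
theorem doubleWell_gammaConv
    (ε : ℕ → ℝ) (hεpos : ∀ k, 0 < ε k) (hε : Tendsto ε atTop (nhds 0)) :
    GammaConv (fun (νs : ℕ → YMb) (ν : YMb) => NarrowConv (fun n => (νs n).1) ν.1)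
      (fun k ν => (((1 / ε k) * ∫ x in I01, ∫ t, Phi t ∂(ν.1 x) : ℝ) : EReal))
      (fun ν => if ∀ᵐ x ∂(volume.restrict I01), ν.1 x ({-1, 1} : Set ℝ) = 1 then
          (0 : EReal) else ⊤) := by
  simp only [inner_eq, ← energy_eq_zero]
  refine ⟨fun νs ν hconv => ?_, fun ν => ⟨fun _ => ν, ?_, ?_⟩⟩
  · beta_reduce
    split_ifs with h
    · refine le_liminf_of_le (by isBoundedDefault) (Eventually.of_forall fun n => ?_)
      exact EReal.coe_nonneg.2
        (mul_nonneg (one_div_nonneg.2 (hεpos n).le) (energy_nonneg (νs n)))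
    · have hpos : 0 < ∫ x in I01, ∫ t, PhiT t ∂(ν.1 x) :=
        lt_of_le_of_ne (energy_nonneg ν) (Ne.symm h)
      have hJ := hconv PhiT PhiT_continuous ⟨1, PhiT_abs_le⟩ (fun _ => 1)
        (by unfold I01; exact integrableOn_const (by simp))
      simp only [one_mul] at hJ
      have hinv : Tendsto (fun n => 1 / ε n) atTop atTop := by
        simp only [one_div]
        apply Tendsto.inv_tendsto_nhdsGT_zero
        exact tendsto_nhdsWithin_iff.2 ⟨hε, Eventually.of_forall hεpos⟩
      have := EReal.tendsto_coe_nhds_top_iff.2 (hinv.atTop_mul_pos hpos hJ)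
      exact this.liminf_eq.ge
  · intro f _ _ g _
    exact tendsto_const_nhds
  · beta_reduce
    split_ifs with h
    · simp [h]
    · exact le_top
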